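/- Let d ≥ 2 and n be integers with n ≥ e^d, and let U be a random n×d matrix drawn from the symmetric measure on the Stiefel manifold St(n,d), with rows u_1,…,u_n. Then E[ max_{1 ≤ i ≤ n} ‖u_i‖ ] ≤ 3 · sqrt((ln n)/n). -/

import Mathlib

open MeasureTheory ProbabilityTheory Real Matrix

noncomputable section

/-- Matrices over a measurable space carry the (Borel) product measurable structure. -/
instance matrixMeasurableSpace {m n α : Type*} [MeasurableSpace α] :
    MeasurableSpace (Matrix m n α) :=
  inferInstanceAs (MeasurableSpace (m → n → α))

/-- The Euclidean norm of the `i`-th row of an `n × d` real matrix. -/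
def rowNorm {n d : ℕ} (U : Matrix (Fin n) (Fin d) ℝ) (i : Fin n) : ℝ :=
  Real.sqrt (∑ j : Fin d, (U i j) ^ 2)

/-- Sign attached to a Boolean. -/
def sgnB (b : Bool) : ℝ := if b then 1 else -1

lemma sgnB_sq (b : Bool) : sgnB b ^ 2 = 1 := by cases b <;> simp [sgnB]

lemma gauss_shift (y : ℝ) :
    ∫ x : ℝ, Real.exp (x * y - x ^ 2) = Real.sqrt Real.pi * Real.exp (y ^ 2 / 4) := by
  have h : ∀ x : ℝ, Real.exp (x * y - x ^ 2)
      = Real.exp (y ^ 2 / 4) * (fun z => Real.exp (-1 * z ^ 2)) (x - y / 2) := by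
    intro x
    simp only
    rw [← Real.exp_add]; congr 1; ring
  simp_rw [h]
  rw [integral_const_mul, integral_sub_right_eq_self (fun z => Real.exp (-1 * z ^ 2)),
    integral_gaussian]
  simp [mul_comm]

lemma gauss_shift_integrable (y : ℝ) :
    Integrable (fun x : ℝ => Real.exp (x * y - x ^ 2)) := by
  have h : ∀ x : ℝ, Real.exp (x * y - x ^ 2)
      = Real.exp (y ^ 2 / 4) * (fun z => Real.exp (-1 * z ^ 2)) (x - y / 2) := by
    intro x
    simp only
    rw [← Real.exp_add]; congr 1; ring
  simp_rw [h]
  exact ((integrable_exp_neg_mul_sq one_pos).comp_sub_right (y / 2)).const_mul _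

lemma sum_sgn_exp {n : ℕ} (a : Fin n → ℝ) :
    ∑ e : Fin n → Bool, Real.exp (∑ i, sgnB (e i) * a i) ≤
      2 ^ n * Real.exp (∑ i, a i ^ 2 / 2) := by
  simp_rw [Real.exp_sum]
  rw [← Fintype.prod_sum (fun i (b : Bool) => Real.exp (sgnB b * a i))]
  calc _ ≤ ∏ i : Fin n, (2 * Real.exp (a i ^ 2 / 2)) := by
        apply Finset.prod_le_prod
        · intro i _; positivity
        · intro i _
          have := Real.cosh_le_exp_half_sq (a i)
          rw [Real.cosh_eq] at this
          simp [sgnB]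
          linarith
    _ = _ := by rw [Finset.prod_mul_distrib]; simp

lemma stiefel_sq {n d : ℕ} (U : Matrix (Fin n) (Fin d) ℝ) (hU : Uᵀ * U = 1) (x : Fin d → ℝ) :
    ∑ i, (∑ j, U i j * x j) ^ 2 = ∑ j, x j ^ 2 := by
  have h1 : (U *ᵥ x) ⬝ᵥ (U *ᵥ x) = x ⬝ᵥ x := by
    rw [Matrix.dotProduct_mulVec, ← Matrix.mulVec_transpose, Matrix.mulVec_mulVec, hU,
      Matrix.one_mulVec]
  simpa [Matrix.mulVec, dotProduct, sq] using h1

lemma pointwise_bound {n d : ℕ} (U : Matrix (Fin n) (Fin d) ℝ) (hU : Uᵀ * U = 1) :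
    ∑ e : Fin n → Bool, Real.exp ((∑ j, (∑ i, sgnB (e i) * U i j) ^ 2) / 4) ≤
      2 ^ n * Real.sqrt 2 ^ d := by
  have hpi : 0 < Real.sqrt Real.pi ^ d := by positivity
  have key : ∀ y : Fin d → ℝ, Real.sqrt Real.pi ^ d * Real.exp ((∑ j, y j ^ 2) / 4) =
      ∫ x : Fin d → ℝ, ∏ j, Real.exp (x j * y j - x j ^ 2) := by
    intro y
    rw [integral_fintype_prod_volume_eq_prod (fun j x => Real.exp (x * y j - x ^ 2))]
    simp_rw [gauss_shift]
    rw [Finset.prod_mul_distrib, Finset.sum_div, Real.exp_sum]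
    simp
  have hint : ∀ y : Fin d → ℝ,
      Integrable (fun x : Fin d → ℝ => ∏ j, Real.exp (x j * y j - x j ^ 2)) := by
    intro y
    exact Integrable.fintype_prod (f := fun j x => Real.exp (x * y j - x ^ 2))
      (fun j => gauss_shift_integrable (y j))
  have hg : Integrable (fun x : Fin d → ℝ => ∏ j, Real.exp (-(1/2) * x j ^ 2)) :=
    Integrable.fintype_prod (f := fun (_ : Fin d) x => Real.exp (-(1/2) * x ^ 2))
      (fun j => integrable_exp_neg_mul_sq (by norm_num))
  have hgv : ∫ x : Fin d → ℝ, ∏ j, Real.exp (-(1/2) * x j ^ 2)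
      = Real.sqrt Real.pi ^ d * Real.sqrt 2 ^ d := by
    rw [integral_fintype_prod_volume_eq_prod (fun j x => Real.exp (-(1/2) * x ^ 2))]
    simp_rw [integral_gaussian]
    rw [← mul_pow, ← Real.sqrt_mul Real.pi_pos.le]
    simp
  refine le_of_mul_le_mul_left ?_ hpi
  rw [Finset.mul_sum]
  simp_rw [key]
  rw [← integral_finsetSum _ (fun e _ => hint _)]
  calc _ ≤ ∫ x : Fin d → ℝ, 2 ^ n * ∏ j, Real.exp (-(1/2) * x j ^ 2) := by
        apply integral_mono (integrable_finsetSum _ (fun e _ => hint _)) (hg.const_mul _)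
        intro x
        simp only [← Real.exp_sum]
        have h1 := sum_sgn_exp (fun i => ∑ j, U i j * x j)
        rw [← Finset.sum_div, stiefel_sq U hU] at h1
        calc _ = (∑ e : Fin n → Bool, Real.exp (∑ i, sgnB (e i) * ∑ j, U i j * x j))
              * Real.exp (-∑ j, x j ^ 2) := by
              rw [Finset.sum_mul]
              refine Finset.sum_congr rfl fun e _ => ?_
              rw [← Real.exp_add, Finset.sum_sub_distrib]
              congr 1
              simp_rw [Finset.mul_sum]
              rw [Finset.sum_comm, sub_eq_add_neg]
              congr 1
              refine Finset.sum_congr rfl fun i _ => Finset.sum_congr rfl fun j _ => ?_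
              ring
          _ ≤ _ := mul_le_mul_of_nonneg_right h1 (Real.exp_pos _).le
          _ = _ := by
              rw [mul_assoc, ← Real.exp_add, ← Finset.mul_sum]
              congr 2; ring
    _ = _ := by rw [integral_const_mul, hgv]; ring

lemma exists_orth {n : ℕ} (i : Fin n) (v : Fin n → ℝ) (hv : ∑ k, v k ^ 2 = 1) :
    ∃ Q : Matrix (Fin n) (Fin n) ℝ, Qᵀ * Q = 1 ∧ Q i = v := by
  have hnorm : ‖(WithLp.toLp 2 v : EuclideanSpace ℝ (Fin n))‖ = 1 := by
    rw [EuclideanSpace.norm_eq]; simp [hv]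
  have ho : Orthonormal ℝ (({i} : Set (Fin n)).domRestrict
      (fun _ : Fin n => (WithLp.toLp 2 v : EuclideanSpace ℝ (Fin n)))) := by
    constructor
    · intro _; exact hnorm
    · intro a b hab; exact absurd (Subsingleton.elim a b) hab
  obtain ⟨b, hb⟩ := Orthonormal.exists_orthonormalBasis_extension_of_card_eq (by simp) ho
  refine ⟨Matrix.of (fun k l => b k l), ?_, ?_⟩
  · rw [mul_eq_one_comm]
    ext k l
    have := b.inner_eq_ite l k
    simp only [PiLp.inner_apply] at this
    simp [Matrix.mul_apply, Matrix.one_apply] at this ⊢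
    rw [this]; simp [eq_comm]
  · ext l; simp only [Matrix.of_apply]; rw [hb i rfl]

lemma meas_entry {n d : ℕ} (i : Fin n) (j : Fin d) :
    Measurable (fun U : Matrix (Fin n) (Fin d) ℝ => U i j) :=
  (measurable_pi_apply j).comp (measurable_pi_apply i)

lemma meas_mul {n d : ℕ} (Q : Matrix (Fin n) (Fin n) ℝ) :
    Measurable (fun U : Matrix (Fin n) (Fin d) ℝ => Q * U) := by
  refine measurable_pi_lambda _ fun i => measurable_pi_lambda _ fun j => ?_
  simp only [Matrix.mul_apply]
  exact Finset.measurable_fun_sum _ fun k _ => (meas_entry k j).const_mul _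

lemma meas_stiefel {n d : ℕ} :
    MeasurableSet {U : Matrix (Fin n) (Fin d) ℝ | Uᵀ * U = 1} := by
  have : {U : Matrix (Fin n) (Fin d) ℝ | Uᵀ * U = 1} =
      ⋂ a : Fin d, ⋂ b : Fin d, {U | ∑ k, U k a * U k b = (1 : Matrix (Fin d) (Fin d) ℝ) a b} := by
    ext U
    simp only [Set.mem_ofPred_eq, Set.mem_iInter, ← Matrix.ext_iff, Matrix.mul_apply,
      Matrix.transpose_apply]
  rw [this]
  refine MeasurableSet.iInter fun a => MeasurableSet.iInter fun b => ?_
  exact measurableSet_eq_fun (Finset.measurable_fun_sum _ fun k _ =>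
    (meas_entry k a).mul (meas_entry k b)) measurable_const

lemma stiefel_row {n d : ℕ} (U : Matrix (Fin n) (Fin d) ℝ) (hU : Uᵀ * U = 1) (i : Fin n) :
    ∑ j, U i j ^ 2 ≤ d := by
  have h : ∀ j, U i j ^ 2 ≤ 1 := by
    intro j
    have h1 := congrFun (congrFun hU j) j
    simp only [Matrix.mul_apply, Matrix.transpose_apply, Matrix.one_apply_eq] at h1
    rw [← h1, sq]
    exact Finset.single_le_sum (f := fun k => U k j * U k j)
      (fun k _ => mul_self_nonneg _) (Finset.mem_univ i)
  calc _ ≤ ∑ j : Fin d, (1 : ℝ) := Finset.sum_le_sum fun j _ => h j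
    _ = d := by simp

section
variable {d n : ℕ} (μ : Measure (Matrix (Fin n) (Fin d) ℝ)) [IsProbabilityMeasure μ]

lemma stiefel_ae (hsupp : μ {U : Matrix (Fin n) (Fin d) ℝ | Uᵀ * U = 1} = 1) :
    ∀ᵐ U ∂μ, Uᵀ * U = 1 :=
  (mem_ae_iff_prob_eq_one meas_stiefel).2 hsupp

lemma meas_F (i : Fin n) : Measurable (fun U : Matrix (Fin n) (Fin d) ℝ =>
    Real.exp (n * (∑ j, U i j ^ 2) / 4)) :=
  (((Finset.measurable_fun_sum _ fun j _ => (meas_entry i j).pow_const 2).const_mul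
    (n : ℝ)).div_const 4).exp

lemma int_F (hsupp : μ {U : Matrix (Fin n) (Fin d) ℝ | Uᵀ * U = 1} = 1) (i : Fin n) :
    Integrable (fun U => Real.exp (n * (∑ j, U i j ^ 2) / 4)) μ := by
  refine Integrable.of_bound (meas_F i).aestronglyMeasurable (Real.exp (n * d / 4)) ?_
  filter_upwards [stiefel_ae μ hsupp] with U hU
  rw [Real.norm_eq_abs, abs_of_pos (Real.exp_pos _)]
  have := stiefel_row U hU i
  gcongr

lemma expect_bound (hsupp : μ {U : Matrix (Fin n) (Fin d) ℝ | Uᵀ * U = 1} = 1)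
    (hinv : ∀ Q : Matrix (Fin n) (Fin n) ℝ, Qᵀ * Q = 1 →
      Measure.map (fun U => Q * U) μ = μ) (i : Fin n) :
    ∫ U, Real.exp (n * (∑ j, U i j ^ 2) / 4) ∂μ ≤ Real.sqrt 2 ^ d := by
  have hnpos : (0 : ℝ) < n := by exact_mod_cast i.pos
  have step : ∀ e : Fin n → Bool,
      Integrable (fun U => Real.exp ((∑ j, (∑ k, sgnB (e k) * U k j) ^ 2) / 4)) μ ∧
      ∫ U, Real.exp ((∑ j, (∑ k, sgnB (e k) * U k j) ^ 2) / 4) ∂μ =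
        ∫ U, Real.exp (n * (∑ j, U i j ^ 2) / 4) ∂μ := by
    intro e
    obtain ⟨Q, hQ, hQi⟩ := exists_orth i (fun k => sgnB (e k) / Real.sqrt n) (by
      simp only [div_pow, sgnB_sq, Real.sq_sqrt hnpos.le]
      simp [hnpos.ne'])
    have hmp : MeasurePreserving (fun U => Q * U) μ μ := ⟨meas_mul Q, hinv Q hQ⟩
    have hfun : (fun U : Matrix (Fin n) (Fin d) ℝ =>
        Real.exp ((∑ j, (∑ k, sgnB (e k) * U k j) ^ 2) / 4)) =
        fun U => (fun U => Real.exp (n * (∑ j, U i j ^ 2) / 4)) (Q * U) := by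
      ext U
      simp only [Matrix.mul_apply, hQi]
      congr 2
      rw [Finset.mul_sum]
      refine Finset.sum_congr rfl fun j _ => ?_
      have : ∑ k, sgnB (e k) / Real.sqrt n * U k j
          = (∑ k, sgnB (e k) * U k j) / Real.sqrt n := by
        rw [Finset.sum_div]
        exact Finset.sum_congr rfl fun k _ => by ring
      rw [this, div_pow, Real.sq_sqrt hnpos.le]
      field_simp
    constructor
    · rw [hfun]; exact hmp.integrable_comp_of_integrable (int_F μ hsupp i)
    · rw [hfun]
      conv_rhs => rw [← hmp.map_eq]
      rw [integral_map hmp.measurable.aemeasurable (meas_F i).aestronglyMeasurable]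
  have h1 : ∫ U, ∑ e : Fin n → Bool,
      Real.exp ((∑ j, (∑ k, sgnB (e k) * U k j) ^ 2) / 4) ∂μ
      = 2 ^ n * ∫ U, Real.exp (n * (∑ j, U i j ^ 2) / 4) ∂μ := by
    rw [integral_finsetSum _ (fun e _ => (step e).1)]
    simp_rw [fun e => (step e).2]
    simp
  have h2 : ∫ U, ∑ e : Fin n → Bool,
      Real.exp ((∑ j, (∑ k, sgnB (e k) * U k j) ^ 2) / 4) ∂μ
      ≤ ∫ U, 2 ^ n * Real.sqrt 2 ^ d ∂μ := by
    apply integral_mono_ae (integrable_finsetSum _ fun e _ => (step e).1) (integrable_const _)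
    filter_upwards [stiefel_ae μ hsupp] with U hU
    exact pointwise_bound U hU
  rw [h1] at h2
  simp only [integral_const, probReal_univ, one_smul] at h2
  exact le_of_mul_le_mul_left h2 (by positivity)

end

/-- **Expected maximal row norm of a random Stiefel matrix.**
Let `μ` be the symmetric measure on the Stiefel manifold `St(n,d) = {U : Uᵀ U = I_d}`,
characterized as a probability measure on `n × d` matrices supported on `St(n,d)` and
invariant under left multiplication by every orthogonal `n × n` matrix. If `n ≥ e^d`, then
`E[max_{1 ≤ i ≤ n} ‖u_i‖] ≤ 3 √((ln n)/n)`, where `u_i` are the rows of `U ∼ μ`. -/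
theorem stiefel_expected_max_row_norm
    (d n : ℕ) (hd : 2 ≤ d) (hn : Real.exp d ≤ n)
    (μ : Measure (Matrix (Fin n) (Fin d) ℝ)) [IsProbabilityMeasure μ]
    (hsupp : μ {U : Matrix (Fin n) (Fin d) ℝ | Uᵀ * U = 1} = 1)
    (hinv : ∀ Q : Matrix (Fin n) (Fin n) ℝ, Qᵀ * Q = 1 →
      Measure.map (fun U => Q * U) μ = μ) :
    (∫ U, (⨆ i : Fin n, rowNorm U i) ∂μ) ≤ 3 * Real.sqrt (Real.log n / n) := by

  have hd' : (2 : ℝ) ≤ d := by exact_mod_cast hd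
  have hn0 : (0 : ℝ) < n := lt_of_lt_of_le (Real.exp_pos _) hn
  have hnN : 0 < n := by exact_mod_cast hn0
  haveI : Nonempty (Fin n) := ⟨⟨0, hnN⟩⟩
  have hL : (d : ℝ) ≤ Real.log n := (Real.le_log_iff_exp_le hn0).2 hn
  set b := Real.sqrt (Real.log n / n) with hb
  have hb2 : b ^ 2 = Real.log n / n := Real.sq_sqrt (div_nonneg (by linarith) hn0.le)
  have hbpos : 0 < b := Real.sqrt_pos.2 (div_pos (by linarith) hn0)
  set A : ℝ := n * Real.sqrt 2 ^ d with hA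
  have hApos : 0 < A := by positivity
  have hlogA : Real.log A ≤ 2 * Real.log n := by
    rw [hA, Real.log_mul hn0.ne' (by positivity), Real.log_pow, Real.log_sqrt (by norm_num)]
    have : Real.log 2 < 0.6931471808 := Real.log_two_lt_d9
    nlinarith
  let S : Matrix (Fin n) (Fin d) ℝ → ℝ :=
    fun U => ∑ i, Real.exp (n * (∑ j, U i j ^ 2) / 4)
  have hSint : Integrable S μ := integrable_finsetSum _ fun i _ => int_F μ hsupp i
  have hSle : ∫ U, S U ∂μ ≤ A := by
    simp only [S]
    rw [integral_finsetSum _ fun i _ => int_F μ hsupp i]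
    calc _ ≤ ∑ i : Fin n, Real.sqrt 2 ^ d :=
          Finset.sum_le_sum fun i _ => expect_bound μ hsupp hinv i
      _ = A := by simp [hA]
  have hpt : ∀ U : Matrix (Fin n) (Fin d) ℝ, (⨆ i : Fin n, rowNorm U i) ≤
      3 * b / 2 + (4 / n) * (S U / A - 1 + Real.log A) / (6 * b) := by
    intro U
    refine ciSup_le fun i => ?_
    set r := rowNorm U i with hr
    have hr2 : r ^ 2 = ∑ j, U i j ^ 2 := Real.sq_sqrt (Finset.sum_nonneg fun j _ => sq_nonneg _)
    have h1 : Real.exp (n * r ^ 2 / 4) ≤ S U := by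
      rw [hr2]
      exact Finset.single_le_sum (f := fun i => Real.exp (n * (∑ j, U i j ^ 2) / 4))
        (fun k _ => (Real.exp_pos _).le) (Finset.mem_univ i)
    have h2 : n * r ^ 2 / 4 ≤ S U / A - 1 + Real.log A := by
      have h3 := Real.add_one_le_exp (n * r ^ 2 / 4 - Real.log A)
      rw [Real.exp_sub, Real.exp_log hApos] at h3
      have : Real.exp (n * r ^ 2 / 4) / A ≤ S U / A := by gcongr
      linarith
    have h4 : r ≤ 3 * b / 2 + r ^ 2 / (6 * b) := by
      rw [div_add_div _ _ (by norm_num) (by positivity), le_div_iff₀ (by positivity)]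
      nlinarith [sq_nonneg (r - 3 * b)]
    have h5 : r ^ 2 ≤ (4 / n) * (S U / A - 1 + Real.log A) := by
      calc r ^ 2 = (4 / n) * (n * r ^ 2 / 4) := by field_simp
        _ ≤ _ := by gcongr
    calc r ≤ _ := h4
      _ ≤ _ := by gcongr
  have hgint : Integrable (fun U => 3 * b / 2 + (4 / n) * (S U / A - 1 + Real.log A) / (6 * b)) μ :=
    (integrable_const _).add
      (((((hSint.div_const A).sub (integrable_const 1)).add
        (integrable_const (Real.log A))).const_mul (4 / (n : ℝ))).div_const (6 * b))
  calc (∫ U, (⨆ i : Fin n, rowNorm U i) ∂μ)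
      ≤ ∫ U, (3 * b / 2 + (4 / n) * (S U / A - 1 + Real.log A) / (6 * b)) ∂μ := by
        apply integral_mono_of_nonneg _ hgint (Filter.Eventually.of_forall hpt)
        exact Filter.Eventually.of_forall fun U => Real.iSup_nonneg fun i => Real.sqrt_nonneg _
    _ = ∫ U, ((3 * b / 2 + (4 / n) * (-1 + Real.log A) / (6 * b))
          + (4 / n / A / (6 * b)) * S U) ∂μ := by
        congr 1; ext U; ring
    _ = (3 * b / 2 + (4 / n) * (-1 + Real.log A) / (6 * b))
          + (4 / n / A / (6 * b)) * ∫ U, S U ∂μ := by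
        rw [integral_add (integrable_const _) (hSint.const_mul _), integral_const_mul]
        simp
    _ ≤ (3 * b / 2 + (4 / n) * (-1 + Real.log A) / (6 * b))
          + (4 / n / A / (6 * b)) * A := by gcongr
    _ = 3 * b / 2 + (4 / n) * Real.log A / (6 * b) := by field_simp; ring
    _ ≤ 3 * b / 2 + (4 / n) * (2 * Real.log n) / (6 * b) := by gcongr
    _ = 3 * b / 2 + 8 * b ^ 2 / (6 * b) := by rw [hb2]; ring
    _ ≤ 3 * b := by
        have : 8 * b ^ 2 / (6 * b) = 4 / 3 * b := by field_simp; norm_num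
        linarith
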